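/- arXiv:2512.12933 — 5 statements merged into one kernel-verified Lean document; each statement's English description precedes it below -/
import Mathlib

section
/- Let G be a graph on a finite vertex set V with |V| = n ≥ 4, let u and v be adjacent vertices of G, and let G' be the graph obtained from G by removing the edge uv. Then every 3-element subset of V induces a disconnected subgraph in G exactly when it induces a disconnected subgraph in G' (i.e. Δ₃(G) = Δ₃(G')) if and only if u and v are twins in G. -/
lemma two_edges_center {V : Type*} (H : SimpleGraph V) (T : Set V) (x : V) (hx : x ∈ T)
    (h : ∀ y ∈ T, y = x ∨ H.Adj x y) : (H.induce T).Connected := by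
  rw [SimpleGraph.connected_iff_exists_forall_reachable]
  refine ⟨⟨x, hx⟩, ?_⟩
  rintro ⟨y, hy⟩
  rcases h y hy with rfl | h
  · exact SimpleGraph.Reachable.refl _
  · exact SimpleGraph.Adj.reachable (by simpa using h)

lemma conn_nbr {V : Type*} (H : SimpleGraph V) (T : Set V) (h : (H.induce T).Connected)
    (x y : V) (hx : x ∈ T) (hy : y ∈ T) (hxy : x ≠ y) : ∃ z ∈ T, H.Adj x z := by
  obtain ⟨p⟩ := h.preconnected ⟨x, hx⟩ ⟨y, hy⟩
  cases p with
  | nil => exact absurd rfl hxy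
  | @cons _ z _ hz _ => exact ⟨z.1, z.2, by simpa using hz⟩

lemma conn_three {V : Type*} [DecidableEq V] (H : SimpleGraph V) (a b c : V)
    (hab : a ≠ b) (hac : a ≠ c) (hbc : b ≠ c) :
    (H.induce ((({a, b, c} : Finset V)) : Set V)).Connected ↔
      (H.Adj a b ∧ H.Adj a c) ∨ (H.Adj a b ∧ H.Adj b c) ∨ (H.Adj a c ∧ H.Adj b c) := by
  constructor
  · intro h
    obtain ⟨x, hx, h1⟩ := conn_nbr H _ h a b (by simp) (by simp) hab
    obtain ⟨y, hy, h2⟩ := conn_nbr H _ h b c (by simp) (by simp) hbc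
    obtain ⟨z, hz, h3⟩ := conn_nbr H _ h c a (by simp) (by simp) hac.symm
    have s1 := H.adj_comm a b
    have s2 := H.adj_comm a c
    have s3 := H.adj_comm b c
    simp only [Finset.coe_insert, Finset.coe_singleton, Set.mem_insert_iff,
      Set.mem_singleton_iff] at hx hy hz
    rcases hx with rfl | rfl | rfl <;> rcases hy with rfl | rfl | rfl <;>
      rcases hz with rfl | rfl | rfl <;> simp_all
  · rintro (⟨h1, h2⟩ | ⟨h1, h2⟩ | ⟨h1, h2⟩)
    · exact two_edges_center H _ a (by simp) (by simp [h1, h2])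
    · exact two_edges_center H _ b (by simp) (by simp [h1.symm, h2])
    · exact two_edges_center H _ c (by simp) (by simp [h1.symm, h2.symm])

/-- Removing an edge `uv` does not change the 3-cut complex iff `u` and `v`
are twins in `G`. -/
theorem stmt_3 {V : Type*} [Fintype V] [DecidableEq V] (G : SimpleGraph V)
    (hn : 4 ≤ Fintype.card V) (u v : V) (hadj : G.Adj u v)
    (G' : SimpleGraph V) (hG' : G' = G.deleteEdges {s(u, v)}) :
    (∀ T : Finset V, T.card = 3 →
        (¬ (G.induce (T : Set V)).Connected ↔ ¬ (G'.induce (T : Set V)).Connected)) ↔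
      G.neighborSet u \ {v} = G.neighborSet v \ {u} := by
  have huv := hadj.ne
  have hA : ∀ x y, G'.Adj x y ↔ G.Adj x y ∧ ¬ ((x = u ∧ y = v) ∨ (x = v ∧ y = u)) := by
    intro x y
    subst hG'
    simp [SimpleGraph.deleteEdges_adj]
  have htw : G.neighborSet u \ {v} = G.neighborSet v \ {u} ↔
      ∀ w, w ≠ u → w ≠ v → (G.Adj u w ↔ G.Adj v w) := by
    rw [Set.ext_iff]
    refine forall_congr' fun w => ?_
    simp only [Set.mem_diff, SimpleGraph.mem_neighborSet, Set.mem_singleton_iff]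
    by_cases h1 : w = u
    · subst h1; simp
    · by_cases h2 : w = v
      · subst h2; simp
      · simp [h1, h2]
  rw [htw]
  constructor
  · intro h w hwu hwv
    have := h {u, v, w} (Finset.card_eq_three.2 ⟨u, v, w, huv, hwu.symm, hwv.symm, rfl⟩)
    rw [not_iff_not, conn_three _ _ _ _ huv hwu.symm hwv.symm,
      conn_three _ _ _ _ huv hwu.symm hwv.symm] at this
    simp only [hA] at this
    grind
  · intro h T hT
    obtain ⟨a, b, c, hab, hac, hbc, rfl⟩ := Finset.card_eq_three.1 hT
    rw [not_iff_not, conn_three _ _ _ _ hab hac hbc, conn_three _ _ _ _ hab hac hbc]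
    simp only [hA]
    have s := G.adj_comm
    have ha := h a
    have hb := h b
    have hc := h c
    clear h
    grind
end

section
/- Let G be a finite graph and let A and B be subsets of its vertex set with |A| = |B| = k, such that the induced subgraphs G[A] and G[B] are connected and |A ∩ B| = 1. Then there exist an integer m ≥ 0 and a sequence of vertex subsets A = A₀, A₁, …, A_m = B, each of size k with G[A_i] connected, such that |A_i ∩ A_{i+1}| = k − 1 for every 0 ≤ i < m. -/
/-- A proper nonempty subset of a connected set has a neighbour inside that set. -/
lemma swap_exists_ext {V : Type*} [DecidableEq V] (G : SimpleGraph V)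
    (D S : Finset V) (hD : D.Nonempty) (hDS : D ⊆ S) (hne : D ≠ S)
    (hS : (G.induce (S : Set V)).Connected) :
    ∃ b ∈ S, b ∉ D ∧ ∃ d ∈ D, G.Adj d b := by
  obtain ⟨d, hd⟩ := hD
  obtain ⟨s, hs, hsD⟩ : ∃ s ∈ S, s ∉ D := by
    by_contra! h
    exact hne (Finset.Subset.antisymm hDS h)
  obtain ⟨p⟩ := hS.preconnected ⟨d, hDS hd⟩ ⟨s, hs⟩
  obtain ⟨e, -, h1, h2⟩ := p.exists_boundary_dart {x | x.1 ∈ D} hd hsD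
  exact ⟨e.snd.1, e.snd.2, h2, e.fst.1, h1, e.adj⟩

/-- Adding a neighbour keeps a set connected. -/
lemma swap_insert_connected {V : Type*} [DecidableEq V] (G : SimpleGraph V)
    (D : Finset V) (b d : V) (hd : d ∈ D) (h : G.Adj d b)
    (hD : (G.induce (D : Set V)).Connected) :
    (G.induce ((insert b D : Finset V) : Set V)).Connected := by
  have h1 := G.induce_union_connected hD.preconnected
    (G.induce_pair_connected_of_adj h).preconnected ⟨d, by simpa using hd, by simp⟩
  have h2 : ((insert b D : Finset V) : Set V) = (D : Set V) ∪ {d, b} := by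
    ext x
    simp only [Finset.coe_insert, Set.mem_insert_iff, Finset.mem_coe, Set.mem_union,
      Set.mem_singleton_iff]
    constructor
    · tauto
    · rintro (h | rfl | h) <;> tauto
  rw [h2]
  exact h1

/-- One can delete a vertex outside a given connected subset, keeping connectivity. -/
lemma swap_exists_erase {V : Type*} [DecidableEq V] (G : SimpleGraph V) (S : Finset V)
    (hS : (G.induce (S : Set V)).Connected) (n : ℕ) :
    ∀ C : Finset V, C.Nonempty → C ⊆ S → C ≠ S → (G.induce (C : Set V)).Connected →
      S.card - C.card ≤ n →
      ∃ a ∈ S, a ∉ C ∧ (G.induce ((S.erase a : Finset V) : Set V)).Connected := by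
  induction n with
  | zero =>
    intro C _ hCS hne _ hn
    exact absurd (Finset.eq_of_subset_of_card_le hCS (by omega)) hne
  | succ n ih =>
    intro C hC hCS hne hCc hn
    obtain ⟨b, hbS, hbC, d, hd, hadj⟩ := swap_exists_ext G C S hC hCS hne hS
    by_cases h : insert b C = S
    · refine ⟨b, hbS, hbC, ?_⟩
      rw [← h, Finset.erase_insert hbC]
      exact hCc
    · obtain ⟨a, ha, haC, hc⟩ := ih (insert b C) (Finset.insert_nonempty _ _)
        (Finset.insert_subset hbS hCS) h (swap_insert_connected G C b d hd hadj hCc)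
        (by rw [Finset.card_insert_of_notMem hbC]; omega)
      exact ⟨a, ha, fun h => haC (Finset.mem_insert_of_mem h), hc⟩

/-- Swap-connectivity of connected sets containing a common nonempty connected set. -/
lemma swap_main {V : Type*} [DecidableEq V] (G : SimpleGraph V) (k : ℕ)
    (B : Finset V) (hB : B.card = k) (hBc : (G.induce (B : Set V)).Connected) (n : ℕ) :
    ∀ A C : Finset V, A.card = k → (G.induce (A : Set V)).Connected →
      C.Nonempty → C ⊆ A → C ⊆ B → (G.induce (C : Set V)).Connected → k - C.card ≤ n →
    ∃ (m : ℕ) (f : ℕ → Finset V), f 0 = A ∧ f m = B ∧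
      (∀ i ≤ m, (f i).card = k ∧ (G.induce ((f i : Finset V) : Set V)).Connected) ∧
      (∀ i < m, (f i ∩ f (i + 1)).card = k - 1) := by
  induction n with
  | zero =>
    intro A C hA hAc hC hCA hCB hCc hn
    have h1 := Finset.eq_of_subset_of_card_le hCA (by omega)
    have h2 := Finset.eq_of_subset_of_card_le hCB (by omega)
    exact ⟨0, fun _ => A, rfl, h1.symm.trans h2, fun _ _ => ⟨hA, hAc⟩, by simp⟩
  | succ n ih =>
    intro A C hA hAc hC hCA hCB hCc hn
    by_cases hne : C = B
    · have h1 := Finset.eq_of_subset_of_card_le hCA (by rw [hne]; omega)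
      exact ⟨0, fun _ => A, rfl, h1.symm.trans hne, fun _ _ => ⟨hA, hAc⟩, by simp⟩
    obtain ⟨b, hbB, hbC, d, hd, hadj⟩ := swap_exists_ext G C B hC hCB hne hBc
    have hC' := swap_insert_connected G C b d hd hadj hCc
    have hn' : k - (insert b C).card ≤ n := by
      rw [Finset.card_insert_of_notMem hbC]; omega
    by_cases hbA : b ∈ A
    · exact ih A (insert b C) hA hAc (Finset.insert_nonempty _ _)
        (Finset.insert_subset hbA hCA) (Finset.insert_subset hbB hCB) hC' hn'
    have hneA : C ≠ A := by
      rintro rfl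
      exact hne (Finset.eq_of_subset_of_card_le hCB (by omega))
    obtain ⟨a, haA, haC, hac⟩ := swap_exists_erase G A hAc _ C hC hCA hneA hCc le_rfl
    have hCe : C ⊆ A.erase a := fun x hx =>
      Finset.mem_erase.2 ⟨fun h => haC (h ▸ hx), hCA hx⟩
    have hbe : b ∉ A.erase a := fun h => hbA (Finset.mem_of_mem_erase h)
    have hpos : 0 < A.card := Finset.card_pos.2 ⟨a, haA⟩
    obtain ⟨m, f, h0, hm, hf, hs⟩ := ih (insert b (A.erase a)) (insert b C)
      (by rw [Finset.card_insert_of_notMem hbe, Finset.card_erase_of_mem haA]; omega)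
      (swap_insert_connected G _ b d (hCe hd) hadj hac) (Finset.insert_nonempty _ _)
      (Finset.insert_subset_insert _ hCe) (Finset.insert_subset hbB hCB) hC' hn'
    refine ⟨m + 1, fun i => Nat.casesOn i A f, rfl, hm, ?_, ?_⟩
    · rintro (_ | i) hi
      · exact ⟨hA, hAc⟩
      · exact hf i (by omega)
    · rintro (_ | i) hi
      · change (A ∩ f 0).card = k - 1
        have : A ∩ f 0 = A.erase a := by
          rw [h0, Finset.inter_insert_of_notMem hbA]
          exact Finset.inter_eq_right.2 (Finset.erase_subset _ _)
        rw [this, Finset.card_erase_of_mem haA, hA]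
      · exact hs i (by omega)


/-- Swap-connectivity: two connected `k`-sets meeting in exactly one vertex are
linked by a sequence of connected `k`-sets, consecutive ones sharing `k-1` vertices. -/
theorem stmt_7 {V : Type*} [Fintype V] [DecidableEq V] (G : SimpleGraph V) (k : ℕ)
    (A B : Finset V) (hA : A.card = k) (hB : B.card = k)
    (hAc : (G.induce (A : Set V)).Connected) (hBc : (G.induce (B : Set V)).Connected)
    (hAB : (A ∩ B).card = 1) :
    ∃ (m : ℕ) (f : ℕ → Finset V), f 0 = A ∧ f m = B ∧
      (∀ i ≤ m, (f i).card = k ∧ (G.induce ((f i : Finset V) : Set V)).Connected) ∧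
      (∀ i < m, (f i ∩ f (i + 1)).card = k - 1) := by
  obtain ⟨v, hv⟩ := Finset.card_eq_one.1 hAB
  have hvm : v ∈ A ∩ B := by rw [hv]; simp
  rw [Finset.mem_inter] at hvm
  refine swap_main G k B hB hBc _ A {v} hA hAc (Finset.singleton_nonempty _)
    (by simpa using hvm.1) (by simpa using hvm.2) ?_ le_rfl
  rw [Finset.coe_singleton]
  haveI : Nonempty ({v} : Set V) := ⟨⟨v, rfl⟩⟩
  exact ⟨SimpleGraph.Preconnected.of_subsingleton⟩
end

section
/- For all integers n and d with n ≥ 5 and 1 ≤ d ≤ n−4, there exists a family 𝓕 of (d+1)-element subsets of V = {1,…,n} such that: (a) no graph G on the vertex set {1,…,n} satisfies 𝓕 = {F ⊆ {1,…,n} : |F| = d+1 and the induced subgraph of G on {1,…,n}∖F is disconnected}, and (b) no graph G on the vertex set {1,…,n+1} satisfies 𝓕 = {F ⊆ {1,…,n+1} : |F| = d+1 and the induced subgraph of G on {1,…,n+1}∖F is disconnected}. -/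
/-- The finset `S` induces a connected subgraph of `G`. -/
def ConnOn {V : Type*} (G : SimpleGraph V) (S : Finset V) : Prop :=
  (G.induce (S : Set V)).Connected

/-- A connected set that meets `T` and is not inside `T` has an edge leaving `T`. -/
lemma ConnOn.crossing {V : Type*} {G : SimpleGraph V} {S : Finset V} (h : ConnOn G S)
    (T : Finset V) {a b : V} (ha : a ∈ S) (haT : a ∈ T) (hb : b ∈ S) (hbT : b ∉ T) :
    ∃ t ∈ S, ∃ x ∈ S, t ∈ T ∧ x ∉ T ∧ G.Adj t x := by
  obtain ⟨p⟩ := h.preconnected ⟨a, ha⟩ ⟨b, hb⟩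
  obtain ⟨e, -, h1, h2⟩ := p.exists_boundary_dart {z | (z : V) ∈ T} haT hbT
  exact ⟨e.fst, e.fst.2, e.snd, e.snd.2, h1, h2, e.adj⟩

lemma ConnOn.insert_adj {V : Type*} [DecidableEq V] {G : SimpleGraph V} {T : Finset V}
    (h : ConnOn G T) {t x : V} (ht : t ∈ T) (hadj : G.Adj t x) :
    ConnOn G (insert x T) := by
  have h2 := SimpleGraph.induce_pair_connected_of_adj hadj
  have h3 := SimpleGraph.induce_union_connected h.preconnected h2.preconnected ⟨t, ht, by simp⟩
  have : ((insert x T : Finset V) : Set V) = (T : Set V) ∪ {t, x} := by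
    ext z
    simp only [Finset.coe_insert, Set.mem_insert_iff, Set.mem_union, Finset.mem_coe,
      Set.mem_singleton_iff]
    constructor
    · tauto
    · rintro (h | rfl | rfl) <;> tauto
  unfold ConnOn
  rw [this]
  exact h3

lemma connOn_singleton {V : Type*} (G : SimpleGraph V) (u : V) : ConnOn G {u} := by
  unfold ConnOn
  rw [Finset.coe_singleton]
  have : Nonempty (({u} : Set V)) := ⟨⟨u, rfl⟩⟩
  constructor
  intro a b
  rw [Subsingleton.elim a b]

/-- A connected set contains connected subsets of every smaller positive size through a point. -/
lemma ConnOn.exists_sub {V : Type*} [DecidableEq V] {G : SimpleGraph V} {S : Finset V}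
    (h : ConnOn G S) {u : V} (hu : u ∈ S) (j : ℕ) (hj : j + 1 ≤ S.card) :
    ∃ T ⊆ S, u ∈ T ∧ T.card = j + 1 ∧ ConnOn G T := by
  induction j with
  | zero => exact ⟨{u}, by simpa using hu, by simp, by simp, connOn_singleton G u⟩
  | succ j ih =>
    obtain ⟨T, hTS, huT, hc, hT⟩ := ih (by omega)
    obtain ⟨b, hb, hbT⟩ := Finset.exists_mem_notMem_of_card_lt_card (s := T) (t := S) (by omega)
    obtain ⟨t, -, x, hx, htT, hxT, hadj⟩ := h.crossing T hu huT hb hbT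
    exact ⟨insert x T, Finset.insert_subset hx hTS, by simp [huT],
      by rw [Finset.card_insert_of_notMem hxT, hc], hT.insert_adj htT hadj⟩

lemma case_a {V : Type*} [DecidableEq V] (G : SimpleGraph V) (k : ℕ) (hk : 1 ≤ k)
    (C D : Finset V) (hC : C.card = k)
    (hI : (C ∩ D).Nonempty) (hD : 2 ≤ (D \ C).card)
    (H : ∀ T : Finset V, T.card = k → (ConnOn G T ↔ T = C ∨ T = D)) (hDk : D.card = k) :
    False := by
  have cC := (H C hC).2 (Or.inl rfl)
  have cD := (H D hDk).2 (Or.inr rfl)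
  obtain ⟨s, hs⟩ := hI
  obtain ⟨y, hy⟩ := Finset.card_pos.1 (show 0 < (D \ C).card by omega)
  simp only [Finset.mem_inter, Finset.mem_sdiff] at hs hy
  obtain ⟨t, -, x, hx, htC, hxC, hadj⟩ := cD.crossing C hs.2 hs.1 hy.1 hy.2
  have c1 := cC.insert_adj htC hadj
  obtain ⟨T, hT, hxT, hc, cT⟩ := c1.exists_sub (Finset.mem_insert_self x C) (k - 1)
    (by rw [Finset.card_insert_of_notMem hxC]; omega)
  rcases (H T (by omega)).1 cT with rfl | rfl
  · exact hxC hxT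
  · have : T \ C ⊆ {x} := by
      intro z hz
      simp only [Finset.mem_sdiff] at hz
      have := hT hz.1
      simp only [Finset.mem_insert] at this
      simp
      tauto
    have := Finset.card_le_card this
    simp at this
    omega

lemma case_b {V : Type*} [DecidableEq V] [Fintype V] (G : SimpleGraph V) (v : V) (k : ℕ)
    (hk : 3 ≤ k) (hV : k + 3 ≤ Fintype.card V)
    (C D : Finset V) (hvC : v ∉ C) (hvD : v ∉ D) (hC : C.card = k) (hDk : D.card = k)
    (hI : (C ∩ D).card = k - 2)
    (H : ∀ T : Finset V, v ∉ T → T.card = k → (ConnOn G (insert v T) ↔ T = C ∨ T = D))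
    (H2 : ∀ S : Finset V, v ∉ S → S.card = k + 1 → ConnOn G S) :
    False := by
  -- every neighbour of `v` is the unique element of `C ∩ D`
  have key : ∀ u, G.Adj v u → ∀ s ∈ C ∩ D, s = u := by
    intro u huv s hs
    by_contra hsu
    simp only [Finset.mem_inter] at hs
    have hsv : s ≠ v := by rintro rfl; exact hvC hs.1
    obtain ⟨S, hS1, hS2, hS3⟩ := Finset.exists_subsuperset_card_eq
      (s := {u}) (t := ({s, v} : Finset V)ᶜ) (n := k + 1)
      (by simp [Ne.symm hsu, huv.ne.symm]) (by simp)
      (by rw [Finset.card_compl, Finset.card_pair hsv]; omega)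
    have hsS : s ∉ S := fun h => by simpa using hS2 h
    have hvS : v ∉ S := fun h => by simpa using hS2 h
    obtain ⟨T, hT, huT, hc, cT⟩ := (H2 S hvS hS3).exists_sub (u := u) (by simpa using hS1)
      (k - 1) (by omega)
    have := (H T (fun h => hvS (hT h)) (by omega)).1 (cT.insert_adj huT huv.symm)
    rcases this with rfl | rfl
    · exact hsS (hT hs.1)
    · exact hsS (hT hs.2)
  obtain ⟨u, hu⟩ := Finset.card_pos.1 (show 0 < (C ∩ D).card by omega)
  have huC : u ∈ C := (Finset.mem_inter.1 hu).1
  have huD : u ∈ D := (Finset.mem_inter.1 hu).2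
  have hN : ∀ w, G.Adj v w → w = u := fun w hw => (key w hw u hu).symm
  have cC := (H C hvC hC).2 (Or.inl rfl)
  have cD := (H D hvD hDk).2 (Or.inr rfl)
  have huv : G.Adj v u := by
    obtain ⟨t, -, x, -, ht, hx, hadj⟩ := cC.crossing {v} (a := v) (b := u)
      (by simp) (by simp) (by simp [huC]) (by simp; rintro rfl; exact hvC huC)
    simp at ht
    subst ht
    rwa [← hN x hadj]
  have hCD : C ∩ D = {u} := Finset.eq_singleton_iff_unique_mem.2 ⟨hu, key u huv⟩
  have hk3 : k = 3 := by
    rw [hCD] at hI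
    simp at hI
    omega
  have nb : ∀ E : Finset V, v ∉ E → E.card = k → ConnOn G (insert v E) → u ∈ E →
      ∃ p ∈ E, p ≠ u ∧ G.Adj u p := by
    intro E hvE hE cE huE
    obtain ⟨b, hb, hbu⟩ := Finset.exists_mem_ne (s := E) (by omega) u
    have hbv : b ≠ v := by rintro rfl; exact hvE hb
    obtain ⟨t, -, x, hx, ht, hx2, hadj⟩ := cE.crossing {v, u} (a := v) (b := b)
      (by simp) (by simp) (by simp [hb]) (by simp [hbu, hbv])
    simp only [Finset.mem_insert, Finset.mem_singleton, not_or] at ht hx hx2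
    rcases ht with rfl | rfl
    · exact absurd (hN x hadj) hx2.2
    · exact ⟨x, hx.resolve_left hx2.1, hx2.2, hadj⟩
  obtain ⟨p, hp, hpu, up⟩ := nb C hvC hC cC huC
  obtain ⟨q, hq, hqu, uq⟩ := nb D hvD hDk cD huD
  have hpD : p ∉ D := fun h => hpu (by
    have : p ∈ C ∩ D := Finset.mem_inter.2 ⟨hp, h⟩
    simpa [hCD] using this)
  have hqC : q ∉ C := fun h => hqu (by
    have : q ∈ C ∩ D := Finset.mem_inter.2 ⟨h, hq⟩
    simpa [hCD] using this)
  have hpq : p ≠ q := by rintro rfl; exact hqC hp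
  have c1 : ConnOn G {q, p, u} :=
    ((connOn_singleton G u).insert_adj (by simp) up).insert_adj (t := u) (by simp) uq
  have c2 := c1.insert_adj (t := u) (x := v) (by simp) huv.symm
  have hvm : v ∉ ({q, p, u} : Finset V) := by
    simp only [Finset.mem_insert, Finset.mem_singleton, not_or]
    refine ⟨?_, ?_, ?_⟩ <;> rintro rfl <;> contradiction
  rcases (H _ hvm (by
    rw [hk3]; exact Finset.card_eq_three.2 ⟨q, p, u, hpq.symm, hqu, hpu, rfl⟩)).1 c2 with h | h
  · exact hqC (by rw [← h]; simp)
  · exact hpD (by rw [← h]; simp)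

lemma exists_CD (n k : ℕ) (hk : 3 ≤ k) (hn : k + 2 ≤ n) :
    ∃ C D : Finset (Fin n), C.card = k ∧ D.card = k ∧ (C ∩ D).card = k - 2 ∧
      2 ≤ (D \ C).card := by
  obtain ⟨C, -, hC⟩ := Finset.exists_subset_card_eq
    (s := (Finset.univ : Finset (Fin n))) (n := k) (by simp; omega)
  obtain ⟨A, hA, hAc⟩ := Finset.exists_subset_card_eq (s := C) (n := k - 2) (by omega)
  obtain ⟨B, hB, hBc⟩ := Finset.exists_subset_card_eq (s := Cᶜ) (n := 2)
    (by rw [Finset.card_compl, Fintype.card_fin]; omega)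
  have hd : ∀ x ∈ B, x ∉ C := fun x hx => by simpa using hB hx
  have e1 : C ∩ (A ∪ B) = A := by
    ext x
    have h1 := hd x
    have h2 := @hA x
    simp only [Finset.mem_inter, Finset.mem_union]
    tauto
  have e2 : (A ∪ B) \ C = B := by
    ext x
    have h1 := hd x
    have h2 := @hA x
    simp only [Finset.mem_sdiff, Finset.mem_union]
    tauto
  refine ⟨C, A ∪ B, hC, ?_, by rw [e1, hAc], by rw [e2, hBc]⟩
  rw [Finset.card_union_of_disjoint, hAc, hBc]
  · omega
  · rw [Finset.disjoint_left]
    exact fun x hx hxB => hd x hxB (hA hx)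

/-- `m(d,n) ≥ 2` for `n ≥ 5` and `1 ≤ d ≤ n - 4`: there is a family `𝓕` of
`(d+1)`-subsets of `{1,…,n}` (here `Fin n`) that is not the family of `(d+1)`-subsets
with disconnected complements of any graph on `n` vertices, nor (viewed inside
`{1,…,n+1}`, here `Fin (n+1)`) of any graph on `n+1` vertices. -/
theorem stmt_12 (n d : ℕ) (hn : 5 ≤ n) (hd1 : 1 ≤ d) (hd2 : d ≤ n - 4) :
    ∃ 𝓕 : Set (Finset (Fin n)),
      (∀ F ∈ 𝓕, F.card = d + 1) ∧
      (¬ ∃ G : SimpleGraph (Fin n),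
        𝓕 = {F : Finset (Fin n) | F.card = d + 1 ∧
          ¬ (G.induce ((F : Set (Fin n))ᶜ)).Connected}) ∧
      (¬ ∃ G : SimpleGraph (Fin (n + 1)),
        (fun F : Finset (Fin n) => F.map Fin.castSuccEmb) '' 𝓕 =
          {F : Finset (Fin (n + 1)) | F.card = d + 1 ∧
            ¬ (G.induce ((F : Set (Fin (n + 1)))ᶜ)).Connected}) := by
  obtain ⟨C, D, hC, hD, hI, hDC⟩ := exists_CD n (n - (d + 1)) (by omega) (by omega)
  refine ⟨{F | F.card = d + 1 ∧ Fᶜ ≠ C ∧ Fᶜ ≠ D}, fun F hF => hF.1, ?_, ?_⟩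
  · rintro ⟨G, hG⟩
    refine case_a G (n - (d + 1)) (by omega) C D hC (Finset.card_pos.1 (by omega)) hDC ?_ hD
    intro T hT
    have hTc : Tᶜ.card = d + 1 := by
      rw [Finset.card_compl, Fintype.card_fin]; omega
    have h := Set.ext_iff.1 hG Tᶜ
    simp only [Set.mem_ofPred_eq, hTc, true_and, compl_compl] at h
    rw [Finset.coe_compl, compl_compl] at h
    unfold ConnOn
    tauto
  · rintro ⟨G, hG⟩
    have hlast : ∀ T : Finset (Fin n), Fin.last n ∉ T.map Fin.castSuccEmb := by
      intro T h
      obtain ⟨a, -, ha⟩ := Finset.mem_map.1 h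
      exact (Fin.castSucc_lt_last a).ne ha
    have hlift : ∀ T : Finset (Fin (n + 1)), Fin.last n ∉ T →
        ∃ T' : Finset (Fin n), T = T'.map Fin.castSuccEmb := by
      intro T hT
      refine ⟨Finset.univ.filter (fun i => i.castSucc ∈ T), ?_⟩
      ext x
      induction x using Fin.lastCases with
      | last => simp [hT]
      | cast i => simp
    have hcompl : ∀ T : Finset (Fin n),
        (insert (Fin.last n) (T.map Fin.castSuccEmb))ᶜ = Tᶜ.map Fin.castSuccEmb := by
      intro T
      ext x
      induction x using Fin.lastCases with
      | last => simp
      | cast i => simp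
    refine case_b G (Fin.last n) (n - (d + 1)) (by omega)
      (by rw [Fintype.card_fin]; omega)
      (C.map Fin.castSuccEmb) (D.map Fin.castSuccEmb) (hlast C) (hlast D) (by simpa using hC)
      (by simpa using hD) (by rw [← Finset.map_inter, Finset.card_map, hI]) ?_ ?_
    · intro T hvT hT
      obtain ⟨T, rfl⟩ := hlift T hvT
      rw [Finset.card_map] at hT
      have hTc : Tᶜ.card = d + 1 := by
        rw [Finset.card_compl, Fintype.card_fin]; omega
      have h := Set.ext_iff.1 hG (Tᶜ.map Fin.castSuccEmb)
      rw [Function.Injective.mem_set_image (Finset.map_injective _)] at h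
      simp only [Set.mem_ofPred_eq, hTc, true_and, compl_compl, Finset.card_map] at h
      rw [← hcompl, Finset.coe_compl, compl_compl] at h
      rw [Finset.map_inj, Finset.map_inj]
      unfold ConnOn
      tauto
    · intro S hvS hS
      by_contra hcon
      have hmem : Sᶜ ∈ {F : Finset (Fin (n + 1)) | F.card = d + 1 ∧
            ¬ (G.induce ((F : Set (Fin (n + 1)))ᶜ)).Connected} := by
        refine ⟨by rw [Finset.card_compl, Fintype.card_fin]; omega, ?_⟩
        rw [Finset.coe_compl, compl_compl]
        exact hcon
      rw [← hG] at hmem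
      obtain ⟨F, -, hF⟩ := hmem
      apply hlast F
      have hF' : F.map Fin.castSuccEmb = Sᶜ := hF
      rw [hF']
      simpa using hvS
end

section
/- Let G be a graph on a finite vertex set V with |V| = n ≥ 5 and no twins. Let u and v be adjacent vertices of G with N(u) ∪ N(v) = V. Then for every graph H on V such that every 3-element subset of V induces a disconnected subgraph in H exactly when it induces a disconnected subgraph in G (i.e. Δ₃(H) = Δ₃(G)), the vertices u and v are adjacent in H. -/
lemma conn_of_center {V : Type*} [DecidableEq V] (G : SimpleGraph V) (T : Finset V) (b : V)
    (hb : b ∈ T) (h : ∀ x ∈ T, x ≠ b → G.Adj b x) : (G.induce (T : Set V)).Connected := by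
  rw [SimpleGraph.connected_iff_exists_forall_reachable]
  refine ⟨⟨b, hb⟩, ?_⟩
  rintro ⟨x, hx⟩
  by_cases hxb : x = b
  · subst hxb; exact SimpleGraph.Reachable.refl _
  · exact SimpleGraph.Adj.reachable (h x hx hxb)

lemma nbr_of_conn {V : Type*} [DecidableEq V] (G : SimpleGraph V) (T : Finset V)
    (h : (G.induce (T : Set V)).Connected) (a b : V) (ha : a ∈ T) (hb : b ∈ T) (hab : a ≠ b) :
    ∃ x ∈ T, G.Adj a x := by
  obtain ⟨w⟩ := h.preconnected ⟨a, ha⟩ ⟨b, hb⟩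
  cases w with
  | nil => exact absurd rfl hab
  | @cons _ c _ hc p => exact ⟨c.1, c.2, hc⟩

lemma conn_triple {V : Type*} [DecidableEq V] (G : SimpleGraph V) (a b c : V)
    (hab : a ≠ b) (hac : a ≠ c) (hbc : b ≠ c) :
    (G.induce (({a, b, c} : Finset V) : Set V)).Connected ↔
      (G.Adj a b ∧ G.Adj b c) ∨ (G.Adj a b ∧ G.Adj a c) ∨ (G.Adj a c ∧ G.Adj b c) := by
  constructor
  · intro h
    have h1 := nbr_of_conn G _ h a b (by simp) (by simp) hab
    have h2 := nbr_of_conn G _ h b a (by simp) (by simp) hab.symm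
    have h3 := nbr_of_conn G _ h c a (by simp) (by simp) hac.symm
    simp [G.adj_comm b a, G.adj_comm c a, G.adj_comm c b] at h1 h2 h3
    tauto
  · rintro (⟨h1, h2⟩ | ⟨h1, h2⟩ | ⟨h1, h2⟩)
    · apply conn_of_center G _ b (by simp)
      simp [h1.symm, h2]
    · apply conn_of_center G _ a (by simp)
      simp [h1, h2]
    · apply conn_of_center G _ c (by simp)
      simp [h1.symm, h2.symm]

/-- The core of the argument, for a vertex `x` adjacent to `u` but not to `v`. -/
lemma twin_core {V : Type*} (G : SimpleGraph V) (u v x : V) (huv : G.Adj u v)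
    (hux : G.Adj u x) (hvx : ¬ G.Adj v x) (hxv : x ≠ v)
    (h : ∀ y, y ≠ u → y ≠ v → y ≠ x →
      (G.Adj v x ∧ G.Adj x y) ∨ (G.Adj v x ∧ G.Adj v y) ∨ (G.Adj v y ∧ G.Adj x y)) :
    ∃ u v : V, u ≠ v ∧ G.neighborSet u \ {v} = G.neighborSet v \ {u} := by
  refine ⟨x, v, hxv, ?_⟩
  ext y
  simp only [Set.mem_diff, SimpleGraph.mem_neighborSet, Set.mem_singleton_iff]
  by_cases hyu : y = u
  · subst hyu
    have := hux.ne
    have := huv.ne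
    simp [hux.symm, huv.symm, *]
  by_cases hyv : y = v
  · subst hyv; simp
  by_cases hyx : y = x
  · subst hyx; simp
  have := h y hyu hyv hyx
  tauto

/-- If `G` has no twins and `u ∼ v` with `N(u) ∪ N(v) = V`, then the edge `uv`
is present in every graph with the same 3-cut complex as `G`. -/
theorem stmt_14 {V : Type*} [Fintype V] [DecidableEq V] (G : SimpleGraph V)
    (hn : 5 ≤ Fintype.card V)
    (htwins : ¬ ∃ u v : V, u ≠ v ∧ G.neighborSet u \ {v} = G.neighborSet v \ {u})
    (u v : V) (hadj : G.Adj u v)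
    (hdom : G.neighborSet u ∪ G.neighborSet v = Set.univ) :
    ∀ H : SimpleGraph V,
      (∀ T : Finset V, T.card = 3 →
        (¬ (H.induce (T : Set V)).Connected ↔ ¬ (G.induce (T : Set V)).Connected)) →
      H.Adj u v := by
  intro H hH
  by_contra hnot
  have key : ∀ a b c : V, a ≠ b → a ≠ c → b ≠ c →
      (((H.Adj a b ∧ H.Adj b c) ∨ (H.Adj a b ∧ H.Adj a c) ∨ (H.Adj a c ∧ H.Adj b c)) ↔
      ((G.Adj a b ∧ G.Adj b c) ∨ (G.Adj a b ∧ G.Adj a c) ∨ (G.Adj a c ∧ G.Adj b c))) := by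
    intro a b c hab hac hbc
    rw [← conn_triple H a b c hab hac hbc, ← conn_triple G a b c hab hac hbc]
    exact not_iff_not.mp (hH {a, b, c} (Finset.card_eq_three.mpr ⟨a, b, c, hab, hac, hbc, rfl⟩))
  have huv := hadj.ne
  have hd : ∀ w, G.Adj u w ∨ G.Adj v w := fun w => by
    have : w ∈ G.neighborSet u ∪ G.neighborSet v := hdom ▸ Set.mem_univ w
    simpa using this
  have hHw : ∀ w, w ≠ u → w ≠ v → H.Adj u w ∧ H.Adj v w := fun w h1 h2 => by
    have := key u v w huv h1.symm h2.symm
    have := hd w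
    tauto
  apply htwins
  by_cases hA : ∃ x, x ≠ v ∧ G.Adj u x ∧ ¬ G.Adj v x
  · obtain ⟨x, hxv, hux, hvx⟩ := hA
    refine twin_core G u v x hadj hux hvx hxv fun y h1 h2 h3 => ?_
    have e1 := hHw x hux.ne.symm hxv
    have e2 := hHw y h1 h2
    exact (key v x y hxv.symm h2.symm h3.symm).1 (Or.inr (Or.inl ⟨e1.2, e2.2⟩))
  by_cases hB : ∃ x, x ≠ u ∧ G.Adj v x ∧ ¬ G.Adj u x
  · obtain ⟨x, hxu, hvx, hux⟩ := hB
    refine twin_core G v u x hadj.symm hvx hux hxu fun y h1 h2 h3 => ?_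
    have e1 := hHw x hxu hvx.ne.symm
    have e2 := hHw y h2 h1
    exact (key u x y hxu.symm h2.symm h3.symm).1 (Or.inr (Or.inl ⟨e1.1, e2.1⟩))
  refine ⟨u, v, huv, ?_⟩
  push Not at hA hB
  ext y
  simp only [Set.mem_diff, SimpleGraph.mem_neighborSet, Set.mem_singleton_iff]
  constructor
  · rintro ⟨h1, h2⟩
    exact ⟨hA y h2 h1, h1.ne.symm⟩
  · rintro ⟨h1, h2⟩
    exact ⟨hB y h2 h1, h1.ne.symm⟩
end

section
/- There is no graph G on the vertex set {1,2,3,4,5,6} such that for every 2-element subset F of {1,…,6}, the induced subgraph of G on {1,…,6}∖F is disconnected if and only if F ⊆ {1,…,5} and F ∉ {{1,2},{4,5}}. -/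
theorem conn_iff_cut {V : Type*} (H : SimpleGraph V) [Nonempty V] :
    H.Connected ↔ ∀ S : Set V, S.Nonempty → Sᶜ.Nonempty → ∃ x ∈ S, ∃ y ∉ S, H.Adj x y := by
  constructor
  · rintro h S ⟨u, hu⟩ ⟨v, hv⟩
    obtain ⟨p⟩ := h.preconnected u v
    obtain ⟨d, -, h1, h2⟩ := p.exists_boundary_dart S hu hv
    exact ⟨_, h1, _, h2, d.adj⟩
  · intro h
    refine ⟨fun u v => ?_⟩
    by_contra hv
    obtain ⟨x, hx, y, hy, hxy⟩ := h {w | H.Reachable u w} ⟨u, SimpleGraph.Reachable.refl u⟩ ⟨v, hv⟩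
    exact hy (SimpleGraph.Reachable.trans hx hxy.reachable)

/-- Every cut of a graph on four vertices is crossed. -/
def cutB (ab ac ad bc bd cd : Bool) : Bool :=
  (ab || ac || ad) && (ab || bc || bd) && (ac || bc || cd) && (ad || bd || cd) &&
  (ac || ad || bc || bd) && (ab || ad || bc || cd) && (ab || ac || bd || cd)

open Classical in
theorem conn4 (G : SimpleGraph (Fin 6)) (S : Set (Fin 6)) (a b c d : Fin 6)
    (hab : a ≠ b) (hac : a ≠ c) (had : a ≠ d) (hbc : b ≠ c) (hbd : b ≠ d) (hcd : c ≠ d)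
    (hS : ∀ x, x ∈ S ↔ x = a ∨ x = b ∨ x = c ∨ x = d) :
    (G.induce S).Connected ↔ cutB (decide (G.Adj a b)) (decide (G.Adj a c)) (decide (G.Adj a d))
      (decide (G.Adj b c)) (decide (G.Adj b d)) (decide (G.Adj c d)) = true := by
  have ha : a ∈ S := by simp [hS]
  have hb : b ∈ S := by simp [hS]
  have hc : c ∈ S := by simp [hS]
  have hd : d ∈ S := by simp [hS]
  have : Nonempty S := ⟨⟨a, ha⟩⟩
  have key : (G.induce S).Connected ↔ ∀ T : Set (Fin 6), (∃ x ∈ S, x ∈ T) → (∃ x ∈ S, x ∉ T) →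
      ∃ x ∈ S, x ∈ T ∧ ∃ y ∈ S, y ∉ T ∧ G.Adj x y := by
    rw [conn_iff_cut]
    constructor
    · rintro h T ⟨x, hx, hxT⟩ ⟨y, hy, hyT⟩
      obtain ⟨u, hu, v, hv, huv⟩ := h {z | z.1 ∈ T} ⟨⟨x, hx⟩, hxT⟩ ⟨⟨y, hy⟩, hyT⟩
      exact ⟨u, u.2, hu, v, v.2, hv, huv⟩
    · rintro h T ⟨x, hx⟩ ⟨y, hy⟩
      obtain ⟨u, hu, hu', v, hv, hv', huv⟩ := h (Subtype.val '' T) ⟨x, x.2, by simpa using hx⟩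
        ⟨y, y.2, by simpa using hy⟩
      exact ⟨⟨u, hu⟩, by simpa [hu] using hu', ⟨v, hv⟩, by simpa [hv] using hv', huv⟩
  rw [key]
  simp only [hS, cutB, Bool.and_eq_true, Bool.or_eq_true, decide_eq_true_eq, or_and_right,
    exists_or, exists_eq_left]
  have e1 := G.adj_comm a b
  have e2 := G.adj_comm a c
  have e3 := G.adj_comm a d
  have e4 := G.adj_comm b c
  have e5 := G.adj_comm b d
  have e6 := G.adj_comm c d
  constructor
  · intro h
    have h1 := h {a}
    have h2 := h {b}
    have h3 := h {c}
    have h4 := h {d}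
    have h5 := h {a, b}
    have h6 := h {a, c}
    have h7 := h {a, d}
    simp [hab, hac, had, hbc, hbd, hcd, hab.symm, hac.symm, had.symm, hbc.symm, hbd.symm,
      hcd.symm] at h1 h2 h3 h4 h5 h6 h7
    clear h key
    grind
  · intro h T
    clear key hS ha hb hc hd this
    rw [← e1, ← e2, ← e3, ← e4, ← e5, ← e6]
    clear e1 e2 e3 e4 e5 e6
    by_cases ta : a ∈ T <;> by_cases tb : b ∈ T <;> by_cases tc : c ∈ T <;>
      by_cases td : d ∈ T <;> simp only [ta, tb, tc, td, true_and, false_and, not_true_eq_false,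
        not_false_eq_true, or_false, false_or, or_true, true_or, and_true, and_false,
        IsEmpty.forall_iff, forall_const] <;> grind

set_option synthInstance.maxSize 100000 in
set_option synthInstance.maxHeartbeats 0 in
set_option maxRecDepth 100000 in
theorem final : ∀ a01 a02 a03 a04 a12 a13 a14 a23 a24 a34 : Bool,
    cutB a12 a13 a14 a23 a24 a34 = true → cutB a02 a03 a04 a23 a24 a34 = true →
    cutB a01 a03 a04 a13 a14 a34 = true → cutB a01 a02 a04 a12 a14 a24 = true →
    cutB a01 a02 a03 a12 a13 a23 = true →
    ∀ a05 a15 a25 a35 a45 : Bool,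
    cutB a23 a24 a25 a34 a35 a45 = true → cutB a01 a02 a05 a12 a15 a25 = true →
    cutB a13 a14 a15 a34 a35 a45 = false → cutB a12 a14 a15 a24 a25 a45 = false →
    cutB a12 a13 a15 a23 a25 a35 = false → cutB a03 a04 a05 a34 a35 a45 = false →
    cutB a02 a04 a05 a24 a25 a45 = false → cutB a02 a03 a05 a23 a25 a35 = false →
    cutB a01 a04 a05 a14 a15 a45 = false → cutB a01 a03 a05 a13 a15 a35 = false → False := by
  decide +kernel

/-- There is no graph on 6 vertices whose 4-cut complex is generated by all
2-subsets of the first 5 vertices other than `{1,2}` and `{4,5}` (here the six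
vertices are `0,…,5 : Fin 6`, the first five being `0,…,4`). -/
theorem stmt_19 :
    ¬ ∃ G : SimpleGraph (Fin 6),
      ∀ F : Finset (Fin 6), F.card = 2 →
        (¬ (G.induce ((F : Set (Fin 6))ᶜ)).Connected ↔
          (F ⊆ ({0, 1, 2, 3, 4} : Finset (Fin 6)) ∧
            F ≠ ({0, 1} : Finset (Fin 6)) ∧ F ≠ ({3, 4} : Finset (Fin 6)))) := by
  classical
  rintro ⟨G, h⟩
  have pos : ∀ (F : Finset (Fin 6)) (a b c d : Fin 6), F.card = 2 →
      ¬ (F ⊆ ({0, 1, 2, 3, 4} : Finset (Fin 6)) ∧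
            F ≠ ({0, 1} : Finset (Fin 6)) ∧ F ≠ ({3, 4} : Finset (Fin 6))) →
      (a ≠ b ∧ a ≠ c ∧ a ≠ d ∧ b ≠ c ∧ b ≠ d ∧ c ≠ d) →
      (∀ x, x ∉ F ↔ x = a ∨ x = b ∨ x = c ∨ x = d) →
      cutB (decide (G.Adj a b)) (decide (G.Adj a c)) (decide (G.Adj a d))
      (decide (G.Adj b c)) (decide (G.Adj b d)) (decide (G.Adj c d)) = true := by
    rintro F a b c d hF hn ⟨h1, h2, h3, h4, h5, h6⟩ hx
    rw [← h F hF, not_not, conn4 G _ a b c d h1 h2 h3 h4 h5 h6 (by simpa using hx)] at hn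
    convert hn
  have neg : ∀ (F : Finset (Fin 6)) (a b c d : Fin 6), F.card = 2 →
      (F ⊆ ({0, 1, 2, 3, 4} : Finset (Fin 6)) ∧
            F ≠ ({0, 1} : Finset (Fin 6)) ∧ F ≠ ({3, 4} : Finset (Fin 6))) →
      (a ≠ b ∧ a ≠ c ∧ a ≠ d ∧ b ≠ c ∧ b ≠ d ∧ c ≠ d) →
      (∀ x, x ∉ F ↔ x = a ∨ x = b ∨ x = c ∨ x = d) →
      cutB (decide (G.Adj a b)) (decide (G.Adj a c)) (decide (G.Adj a d))
      (decide (G.Adj b c)) (decide (G.Adj b d)) (decide (G.Adj c d)) = false := by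
    rintro F a b c d hF hn ⟨h1, h2, h3, h4, h5, h6⟩ hx
    rw [← h F hF, conn4 G _ a b c d h1 h2 h3 h4 h5 h6 (by simpa using hx),
      Bool.not_eq_true] at hn
    convert hn
  exact final _ _ _ _ _ _ _ _ _ _
    (pos {0, 5} 1 2 3 4 (by decide) (by decide) (by decide) (by decide))
    (pos {1, 5} 0 2 3 4 (by decide) (by decide) (by decide) (by decide))
    (pos {2, 5} 0 1 3 4 (by decide) (by decide) (by decide) (by decide))
    (pos {3, 5} 0 1 2 4 (by decide) (by decide) (by decide) (by decide))
    (pos {4, 5} 0 1 2 3 (by decide) (by decide) (by decide) (by decide))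
    _ _ _ _ _
    (pos {0, 1} 2 3 4 5 (by decide) (by decide) (by decide) (by decide))
    (pos {3, 4} 0 1 2 5 (by decide) (by decide) (by decide) (by decide))
    (neg {0, 2} 1 3 4 5 (by decide) (by decide) (by decide) (by decide))
    (neg {0, 3} 1 2 4 5 (by decide) (by decide) (by decide) (by decide))
    (neg {0, 4} 1 2 3 5 (by decide) (by decide) (by decide) (by decide))
    (neg {1, 2} 0 3 4 5 (by decide) (by decide) (by decide) (by decide))
    (neg {1, 3} 0 2 4 5 (by decide) (by decide) (by decide) (by decide))
    (neg {1, 4} 0 2 3 5 (by decide) (by decide) (by decide) (by decide))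
    (neg {2, 3} 0 1 4 5 (by decide) (by decide) (by decide) (by decide))
    (neg {2, 4} 0 1 3 5 (by decide) (by decide) (by decide) (by decide))
end
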